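/- arXiv:2510.20530 — 2 statements merged into one kernel-verified Lean document; each statement's English description precedes it below -/
import Mathlib

section
/- Fix integers d and k with 1 ≤ k < d − 1 (so d ≥ 3), a unit vector ψ ∈ ℂ^d, and a real number p. If (S, S_ch) is a parallel k-call probabilistic protocol satisfying S ⋆ U^{⊗k} = p · U̅|ψ⟩⟨ψ|Uᵀ for all U ∈ SU(d), then p = 0. That is, exact probabilistic complex conjugation of an unknown d-dimensional unitary on a known pure state is impossible with fewer than d−1 parallel calls, even with full classical knowledge of the input state. -/
open Matrix Kronecker BigOperators ComplexOrder

noncomputable section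

/-- Entrywise complex conjugate `U̅` of a matrix. -/
def mconj {d : ℕ} (U : Matrix (Fin d) (Fin d) ℂ) : Matrix (Fin d) (Fin d) ℂ :=
  U.map (starRingEnd ℂ)

/-- Rank-one outer product `|v⟩⟨v|`. -/
def outer {n : Type*} (v : n → ℂ) : Matrix n n ℂ :=
  Matrix.vecMulVec v (star v)

/-- Choi vector `|U⟩⟩ = Σ_i e_i ⊗ U e_i`. -/
def choiVec {d : ℕ} (U : Matrix (Fin d) (Fin d) ℂ) : Fin d × Fin d → ℂ :=
  fun p => U p.2 p.1

/-- `|U⟩⟩⟨⟨U|`. -/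
def choiProj {d : ℕ} (U : Matrix (Fin d) (Fin d) ℂ) :
    Matrix (Fin d × Fin d) (Fin d × Fin d) ℂ :=
  outer (choiVec U)

/-- Partial trace over the first tensor factor. -/
def ptrLeft {α β : Type*} [Fintype α] (S : Matrix (α × β) (α × β) ℂ) :
    Matrix β β ℂ :=
  fun b b' => ∑ a, S (a, b) (a, b')

/-- Partial trace over the second (last) tensor factor. -/
def ptrRight {α β : Type*} [Fintype β] (S : Matrix (α × β) (α × β) ℂ) :
    Matrix α α ℂ :=
  fun a a' => ∑ b, S (a, b) (a', b)

/-- `(|U⟩⟩⟨⟨U|)^{⊗k}`, where the `j`-th copy acts on the `j`-th factor of `I`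
and the `j`-th factor of `O`; `(ℂ^d)^{⊗k}` is indexed by `Fin k → Fin d`. -/
def choiProjK {d : ℕ} (k : ℕ) (U : Matrix (Fin d) (Fin d) ℂ) :
    Matrix ((Fin k → Fin d) × (Fin k → Fin d)) ((Fin k → Fin d) × (Fin k → Fin d)) ℂ :=
  fun x y => ∏ j, choiProj U (x.1 j, x.2 j) (y.1 j, y.2 j)

/-- Action `S ⋆ U^{⊗k} := Tr_{IO}[ S · ((|U̅⟩⟩⟨⟨U̅|)^{⊗k}_{IO} ⊗ 1_F) ]` of a
parallel `k`-call supermap on the unitary channel given by `U`. -/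
def actK {d k : ℕ}
    (S : Matrix (((Fin k → Fin d) × (Fin k → Fin d)) × Fin d)
        (((Fin k → Fin d) × (Fin k → Fin d)) × Fin d) ℂ)
    (U : Matrix (Fin d) (Fin d) ℂ) : Matrix (Fin d) (Fin d) ℂ :=
  ptrLeft (S * (choiProjK k (mconj U) ⊗ₖ (1 : Matrix (Fin d) (Fin d) ℂ)))

/-- A parallel `k`-call probabilistic protocol: `0 ≤ S ≤ S_ch` with
`Tr_F(S_ch) = σ ⊗ 1_O`, `σ ≥ 0` on `(ℂ^d)^{⊗k}`, `Tr σ = 1`. -/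
def IsProtocolK {d k : ℕ}
    (S Sch : Matrix (((Fin k → Fin d) × (Fin k → Fin d)) × Fin d)
        (((Fin k → Fin d) × (Fin k → Fin d)) × Fin d) ℂ) : Prop :=
  S.PosSemidef ∧ (Sch - S).PosSemidef ∧
    ∃ σ : Matrix (Fin k → Fin d) (Fin k → Fin d) ℂ, σ.PosSemidef ∧ σ.trace = 1 ∧
      ptrRight Sch = σ ⊗ₖ (1 : Matrix (Fin k → Fin d) (Fin k → Fin d) ℂ)

/-- The unit circle in `ℂ` is infinite. -/
lemma circle_infinite : (Metric.sphere (0 : ℂ) 1).Infinite := by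
  refine IsPreconnected.infinite_of_nontrivial
    (isPreconnected_sphere (by rw [Complex.rank_real_complex]; norm_num) _ _) ?_
  refine ⟨1, by simp, -1, by simp, ?_⟩
  norm_num

lemma exists_onb {d : ℕ} (i0 : Fin d) (v : EuclideanSpace ℂ (Fin d)) (hv : ‖v‖ = 1) :
    ∃ b : OrthonormalBasis (Fin d) ℂ (EuclideanSpace ℂ (Fin d)), b i0 = v := by
  obtain ⟨b, hb⟩ := Orthonormal.exists_orthonormalBasis_extension_of_card_eq
    (𝕜 := ℂ) (E := EuclideanSpace ℂ (Fin d)) (ι := Fin d) (by simp)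
    (v := fun _ => v) (s := {i0}) (by
      rw [orthonormal_iff_ite]
      rintro ⟨i, hi⟩ ⟨j, hj⟩
      have hi' : i = i0 := hi
      have hj' : j = i0 := hj
      subst hi'
      subst hj'
      simp [Set.domRestrict, inner_self_eq_norm_sq_to_K, hv])
  exact ⟨b, hb i0 rfl⟩

lemma exists_unitary_col {d : ℕ} (i0 : Fin d) (v : EuclideanSpace ℂ (Fin d)) (hv : ‖v‖ = 1) :
    ∃ M : Matrix (Fin d) (Fin d) ℂ, M ∈ Matrix.unitaryGroup (Fin d) ℂ ∧
      M *ᵥ (Pi.single i0 1) = v.ofLp := by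
  obtain ⟨b, hb⟩ := exists_onb i0 v hv
  refine ⟨(EuclideanSpace.basisFun (Fin d) ℂ).toBasis.toMatrix b,
    OrthonormalBasis.toMatrix_orthonormalBasis_mem_unitary _ _, ?_⟩
  ext i
  simp [Module.Basis.toMatrix_apply, hb]

lemma exists_flat_unitary {d : ℕ} (hd : 0 < d) (ψ : Fin d → ℂ) (hψ : star ψ ⬝ᵥ ψ = 1) :
    ∃ W : Matrix (Fin d) (Fin d) ℂ, W ∈ Matrix.unitaryGroup (Fin d) ℂ ∧
      ∃ u : ℂ, u ≠ 0 ∧ ∀ i, (W *ᵥ ψ) i = u := by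
  have hd' : (0 : ℝ) < d := by exact_mod_cast hd
  have hdC : (d : ℂ) ≠ 0 := by exact_mod_cast hd.ne'
  obtain ⟨M, hM, hM1⟩ := exists_unitary_col ⟨0, hd⟩ (WithLp.toLp 2 ψ) (by
    have h : ‖WithLp.toLp 2 ψ‖ ^ 2 = 1 := by
      rw [EuclideanSpace.norm_sq_eq]
      have h2 : ((∑ i, ‖ψ i‖ ^ 2 : ℝ) : ℂ) = 1 := by
        rw [← hψ]
        simp only [dotProduct, Pi.star_apply, RCLike.star_def, Complex.conj_mul']
        push_cast
        rfl
      exact_mod_cast h2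
    exact (sq_eq_sq₀ (norm_nonneg _) zero_le_one).1 (by rw [h]; norm_num))
  obtain ⟨N, hN, hN1⟩ := exists_unitary_col ⟨0, hd⟩
    (WithLp.toLp 2 (fun _ : Fin d => ((Real.sqrt d)⁻¹ : ℂ))) (by
      have h : ‖WithLp.toLp 2 (fun _ : Fin d => ((Real.sqrt d)⁻¹ : ℂ))‖ ^ 2 = 1 := by
        rw [EuclideanSpace.norm_sq_eq]
        simp [Real.sq_sqrt hd'.le, hd'.ne']
      exact (sq_eq_sq₀ (norm_nonneg _) zero_le_one).1 (by rw [h]; norm_num))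
  refine ⟨N * star M, mul_mem hN (Unitary.star_mem hM), ((Real.sqrt d)⁻¹ : ℂ), ?_, ?_⟩
  · have := (Real.sqrt_pos.2 hd').ne'
    exact inv_ne_zero (by exact_mod_cast this)
  · intro i
    have h1 : star M *ᵥ ψ = Pi.single ⟨0, hd⟩ 1 := by
      have : ψ = M *ᵥ Pi.single ⟨0, hd⟩ 1 := by rw [hM1]
      rw [this, Matrix.mulVec_mulVec, (Matrix.mem_unitaryGroup_iff').1 hM, Matrix.one_mulVec]
    rw [← Matrix.mulVec_mulVec, h1, hN1]

/-- Polynomials divisible by every variable have degree at least the number of variables. -/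
lemma poly_zero {d k : ℕ} (hkd : k + 1 < d) (Q : MvPolynomial (Fin d) ℂ)
    (hdeg : Q.totalDegree ≤ k + 1)
    (hdiv : ∀ i, ∃ R, Q = MvPolynomial.X i * R) : Q = 0 := by
  by_contra hQ
  obtain ⟨s, hs⟩ := (MvPolynomial.support_nonempty).2 hQ
  have h1 : ∀ i, 1 ≤ s i := by
    intro i
    obtain ⟨R, hR⟩ := hdiv i
    rw [MvPolynomial.mem_support_iff, hR, MvPolynomial.coeff_X_mul'] at hs
    by_contra h
    apply hs
    rw [if_neg]
    simp only [Finsupp.mem_support_iff]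
    omega
  have h2 := MvPolynomial.le_totalDegree hs
  have h3 : d ≤ s.sum fun _ e => e := by
    rw [Finsupp.sum_fintype _ _ (by simp)]
    calc d = ∑ _i : Fin d, 1 := by simp
      _ ≤ _ := Finset.sum_le_sum fun i _ => h1 i
  omega

/-- The amplitude of a Kraus component. -/
def amp {d k : ℕ} (v : ((Fin k → Fin d) × (Fin k → Fin d)) × Fin d → ℂ)
    (Y : Matrix (Fin d) (Fin d) ℂ) (f : Fin d) : ℂ :=
  ∑ b, star (v (b, f)) * ∏ j, Y (b.2 j) (b.1 j)

lemma choiProjK_eq {d k : ℕ} (Y : Matrix (Fin d) (Fin d) ℂ)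
    (b a : (Fin k → Fin d) × (Fin k → Fin d)) :
    choiProjK k Y b a = (∏ j, Y (b.2 j) (b.1 j)) * star (∏ j, Y (a.2 j) (a.1 j)) := by
  simp [choiProjK, choiProj, outer, choiVec, Matrix.vecMulVec_apply, Finset.prod_mul_distrib]

lemma actK_sum {d k n : ℕ} (v : Fin n → ((Fin k → Fin d) × (Fin k → Fin d)) × Fin d → ℂ)
    (U : Matrix (Fin d) (Fin d) ℂ) (f f' : Fin d) :
    actK (∑ m, Matrix.vecMulVec (v m) (star (v m))) U f f' =
      ∑ m, star (amp (v m) (mconj U) f) * amp (v m) (mconj U) f' := by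
  simp only [actK, ptrLeft, Matrix.mul_apply, Matrix.kroneckerMap_apply, choiProjK_eq,
    Matrix.sum_apply, Matrix.vecMulVec_apply, Matrix.one_apply, amp]
  rw [Finset.sum_congr rfl (fun a _ => Fintype.sum_prod_type _)]
  simp only [mul_ite, mul_one, mul_zero, Finset.sum_ite_eq',
    Finset.mem_univ, if_true, Finset.sum_mul, star_sum, Finset.mul_sum, star_mul, star_star]
  rw [Finset.sum_comm]
  symm
  rw [Finset.sum_comm]
  refine Finset.sum_congr rfl fun x _ => ?_
  rw [Finset.sum_comm]
  refine Finset.sum_congr rfl fun y _ => Finset.sum_congr rfl fun m _ => ?_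
  simp only [Pi.star_apply]
  ring

lemma actK_phase {d k : ℕ}
    (S : Matrix (((Fin k → Fin d) × (Fin k → Fin d)) × Fin d)
        (((Fin k → Fin d) × (Fin k → Fin d)) × Fin d) ℂ)
    (U : Matrix (Fin d) (Fin d) ℂ) (c : ℂ) (hc : star c * c = 1) :
    actK S (c • U) = actK S U := by
  have : choiProjK k (mconj (c • U)) = choiProjK k (mconj U) := by
    ext b a
    simp only [choiProjK_eq, mconj, Matrix.map_apply, Matrix.smul_apply, smul_eq_mul, map_mul,
      Finset.prod_mul_distrib, Finset.prod_const, star_mul', star_pow]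
    have h : (starRingEnd ℂ c) ^ (Finset.univ : Finset (Fin k)).card *
        star (starRingEnd ℂ c) ^ (Finset.univ : Finset (Fin k)).card = 1 := by
      rw [← mul_pow]
      have : starRingEnd ℂ c * star (starRingEnd ℂ c) = 1 := by simpa using hc
      rw [this, one_pow]
    linear_combination (∏ j, starRingEnd ℂ (U (b.2 j) (b.1 j))) *
      star (∏ j, starRingEnd ℂ (U (a.2 j) (a.1 j))) * h
  simp only [actK, this]

lemma target_unitary {d k : ℕ} (hd : 0 < d) (p : ℝ) (ψ : Fin d → ℂ)
    (S : Matrix (((Fin k → Fin d) × (Fin k → Fin d)) × Fin d)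
        (((Fin k → Fin d) × (Fin k → Fin d)) × Fin d) ℂ)
    (htarget : ∀ U : Matrix (Fin d) (Fin d) ℂ, U ∈ Matrix.specialUnitaryGroup (Fin d) ℂ →
      actK S U = (p : ℂ) • (mconj U * outer ψ * Uᵀ))
    (U : Matrix (Fin d) (Fin d) ℂ) (hU : U ∈ Matrix.unitaryGroup (Fin d) ℂ) :
    actK S U = (p : ℂ) • (mconj U * outer ψ * Uᵀ) := by
  have hdet : ‖U.det‖ = 1 := CStarRing.norm_of_mem_unitary (Matrix.det_of_mem_unitary hU)
  obtain ⟨c, hc⟩ := IsAlgClosed.exists_pow_nat_eq (U.det⁻¹) hd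
  have hcn : ‖c‖ = 1 := by
    have : ‖c‖ ^ d = 1 := by rw [← norm_pow, hc, norm_inv, hdet, inv_one]
    exact (pow_eq_one_iff_of_nonneg (norm_nonneg _) hd.ne').1 this
  have hcc : star c * c = 1 := by
    rw [RCLike.star_def, Complex.conj_mul', hcn]; simp
  have hmem : c • U ∈ Matrix.specialUnitaryGroup (Fin d) ℂ := by
    rw [Matrix.mem_specialUnitaryGroup_iff]
    constructor
    · rw [Matrix.mem_unitaryGroup_iff'] at hU ⊢
      rw [star_smul, Matrix.smul_mul, Matrix.mul_smul, smul_smul, hcc, hU, one_smul]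
    · rw [Matrix.det_smul, Fintype.card_fin, hc, inv_mul_cancel₀]
      intro h
      rw [h] at hdet
      simp at hdet
  have h := htarget _ hmem
  rw [actK_phase S U c hcc] at h
  rw [h]
  have h2 : mconj (c • U) = star c • mconj U := by
    ext i j
    simp [mconj]
  rw [h2, Matrix.transpose_smul, Matrix.smul_mul, Matrix.smul_mul, Matrix.mul_smul,
    smul_smul (star c) c, hcc, one_smul]

/-- The amplitude as a polynomial in the diagonal phases. -/
def ampPoly {d k : ℕ} (v : ((Fin k → Fin d) × (Fin k → Fin d)) × Fin d → ℂ)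
    (W : Matrix (Fin d) (Fin d) ℂ) (f : Fin d) : MvPolynomial (Fin d) ℂ :=
  ∑ b, MvPolynomial.C (star (v (b, f)) * ∏ j, W (b.2 j) (b.1 j)) *
    ∏ j, MvPolynomial.X (b.2 j)

lemma ampPoly_eval {d k : ℕ} (v : ((Fin k → Fin d) × (Fin k → Fin d)) × Fin d → ℂ)
    (W : Matrix (Fin d) (Fin d) ℂ) (f : Fin d) (z : Fin d → ℂ) :
    MvPolynomial.eval z (ampPoly v W f) = amp v (Matrix.diagonal z * W) f := by
  simp only [ampPoly, amp, map_sum, map_mul, map_prod, MvPolynomial.eval_C, MvPolynomial.eval_X,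
    Matrix.diagonal_mul, Finset.prod_mul_distrib]
  refine Finset.sum_congr rfl fun b _ => ?_
  ring

lemma ampPoly_deg {d k : ℕ} (v : ((Fin k → Fin d) × (Fin k → Fin d)) × Fin d → ℂ)
    (W : Matrix (Fin d) (Fin d) ℂ) (f : Fin d) :
    (MvPolynomial.X f * ampPoly v W f).totalDegree ≤ k + 1 := by
  have h : (ampPoly v W f).totalDegree ≤ k := by
    refine MvPolynomial.totalDegree_finsetSum_le fun b _ => ?_
    refine (MvPolynomial.totalDegree_mul _ _).trans ?_
    rw [MvPolynomial.totalDegree_C, zero_add]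
    refine (MvPolynomial.totalDegree_finsetProd _ _).trans ?_
    simp
  refine (MvPolynomial.totalDegree_mul _ _).trans ?_
  rw [MvPolynomial.totalDegree_X]
  omega


/-- **No-go for probabilistic exact conjugation with `k < d−1` parallel calls,
known pure input state.** (`k + 1 < d` is equivalent to `k < d − 1`.) -/
theorem conjugation_no_go_k_calls
    (d k : ℕ) (hk : 1 ≤ k) (hkd : k + 1 < d) (p : ℝ)
    (ψ : Fin d → ℂ) (hψ : star ψ ⬝ᵥ ψ = 1)
    (S Sch : Matrix (((Fin k → Fin d) × (Fin k → Fin d)) × Fin d)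
        (((Fin k → Fin d) × (Fin k → Fin d)) × Fin d) ℂ)
    (hprot : IsProtocolK S Sch)
    (htarget : ∀ U : Matrix (Fin d) (Fin d) ℂ, U ∈ Matrix.specialUnitaryGroup (Fin d) ℂ →
      actK S U = (p : ℂ) • (mconj U * outer ψ * Uᵀ)) :
    p = 0 := by
  have hd : 0 < d := by omega
  obtain ⟨W, hW, u, hu, hWu⟩ := exists_flat_unitary hd ψ hψ
  obtain ⟨n, v, hS⟩ := (Matrix.posSemidef_iff_eq_sum_vecMulVec).1 hprot.1
  -- Gram identity on the torus
  have gram : ∀ z : Fin d → ℂ, (∀ i, ‖z i‖ = 1) → ∀ f f',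
      ∑ m, star (z f * amp (v m) (Matrix.diagonal z * W) f) *
        (z f' * amp (v m) (Matrix.diagonal z * W) f') = p * (u * star u) := by
    intro z hz f f'
    have hzz : ∀ i, star (z i) * z i = 1 := fun i => by
      rw [RCLike.star_def, Complex.conj_mul', hz i]; simp
    set Y := Matrix.diagonal z * W with hY
    have hDu : Matrix.diagonal z ∈ Matrix.unitaryGroup (Fin d) ℂ := by
      rw [Matrix.mem_unitaryGroup_iff', Matrix.star_eq_conjTranspose,
        Matrix.diagonal_conjTranspose, Matrix.diagonal_mul_diagonal]
      simp only [Pi.star_apply, hzz, Matrix.diagonal_one]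
    have hYu : Y ∈ Matrix.unitaryGroup (Fin d) ℂ := mul_mem hDu hW
    have hconj : mconj (mconj Y) = Y := by
      ext i j
      simp [mconj]
    have hmY : mconj Y ∈ Matrix.unitaryGroup (Fin d) ℂ := by
      rw [Matrix.mem_unitaryGroup_iff] at hYu ⊢
      have h1 : star (mconj Y) = mconj (star Y) := by
        ext i j
        simp [mconj, Matrix.star_apply]
      rw [h1]
      have h2 : mconj Y * mconj (star Y) = mconj (Y * star Y) := by
        simp only [mconj, Matrix.map_mul]
      rw [h2, hYu]
      simp [mconj]
    have h := target_unitary hd p ψ S htarget (mconj Y) hmY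
    rw [hconj, hS] at h
    have h' := congrFun (congrFun h f) f'
    rw [actK_sum, hconj] at h'
    have hYψ : ∀ i, (Y *ᵥ ψ) i = z i * u := by
      intro i
      rw [hY, ← Matrix.mulVec_mulVec, Matrix.mulVec_diagonal, hWu]
    have hrhs : (Y * outer ψ * (mconj Y)ᵀ) f f' = (z f * u) * star (z f' * u) := by
      have h3 : (mconj Y)ᵀ = Yᴴ := by
        ext i j
        simp [mconj]
      rw [h3, outer, Matrix.mul_vecMulVec, Matrix.vecMulVec_mul, ← Matrix.star_mulVec,
        Matrix.vecMulVec_apply, Pi.star_apply, hYψ, hYψ]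
    rw [Matrix.smul_apply, hrhs, smul_eq_mul] at h'
    calc _ = star (z f) * z f' *
          ∑ m, star (amp (v m) Y f) * amp (v m) Y f' := by
            rw [Finset.mul_sum]
            refine Finset.sum_congr rfl fun m _ => ?_
            rw [star_mul']
            ring
      _ = _ := by
            rw [h', star_mul']
            linear_combination p * u * star u * star (z f') * z f' * hzz f
              + p * u * star u * hzz f'
  have key : ∀ z : Fin d → ℂ, (∀ i, ‖z i‖ = 1) → ∀ m f f',
      z f * amp (v m) (Matrix.diagonal z * W) f =
        z f' * amp (v m) (Matrix.diagonal z * W) f' := by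
    intro z hz m f f'
    set T : Fin n → Fin d → ℂ := fun m f => z f * amp (v m) (Matrix.diagonal z * W) f with hT
    have h0 : ∑ m, star (T m f - T m f') * (T m f - T m f') = 0 := by
      have e : ∀ m, star (T m f - T m f') * (T m f - T m f') =
          star (T m f) * T m f - star (T m f) * T m f' - star (T m f') * T m f
            + star (T m f') * T m f' := by
        intro m
        rw [star_sub]
        ring
      rw [Finset.sum_congr rfl fun m _ => e m, Finset.sum_add_distrib, Finset.sum_sub_distrib,
        Finset.sum_sub_distrib, gram z hz, gram z hz, gram z hz, gram z hz]
      ring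
    have h1 := (dotProduct_star_self_eq_zero (v := fun m => star (T m f - T m f'))).1 (by
      simpa [dotProduct, mul_comm] using h0)
    have h2 := congrFun h1 m
    simp only [Pi.zero_apply, star_eq_zero] at h2
    exact sub_eq_zero.1 h2
  have polyeq : ∀ m f f', MvPolynomial.X f * ampPoly (v m) W f =
      MvPolynomial.X f' * ampPoly (v m) W f' := by
    intro m f f'
    refine MvPolynomial.funext_set (fun _ => Metric.sphere (0 : ℂ) 1)
      (fun _ => circle_infinite) fun z hz => ?_
    have hz' : ∀ i, ‖z i‖ = 1 := fun i => by simpa using hz i (Set.mem_univ i)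
    simpa [ampPoly_eval] using key z hz' m f f'
  have polyzero : ∀ m f, MvPolynomial.X f * ampPoly (v m) W f = 0 := fun m f =>
    poly_zero hkd _ (ampPoly_deg _ _ _) fun i => ⟨_, polyeq m f i⟩
  have hfin := gram (fun _ => 1) (by simp) ⟨0, hd⟩ ⟨0, hd⟩
  have hz : ∀ m, amp (v m) (Matrix.diagonal (fun _ => (1 : ℂ)) * W) ⟨0, hd⟩ = 0 := by
    intro m
    have := congrArg (MvPolynomial.eval (fun _ => (1 : ℂ))) (polyzero m ⟨0, hd⟩)
    simpa only [map_mul, MvPolynomial.eval_X, one_mul, ampPoly_eval, map_zero] using this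
  simp only [hz, mul_zero, Finset.sum_const_zero] at hfin
  have : (p : ℂ) = 0 := by
    rcases mul_eq_zero.1 hfin.symm with h | h
    · exact h
    · exact absurd h (mul_ne_zero hu (star_ne_zero.2 hu))
  exact_mod_cast this
end
end

section
/- Fix integers d and k with 1 ≤ k < d − 1 (so d ≥ 3), a unit vector ψ ∈ ℂ^d, and a real number p. If (S, S_ch) is a parallel k-call probabilistic protocol satisfying S ⋆ U^{⊗k} = p · U†|ψ⟩⟨ψ|U for all U ∈ SU(d), then p = 0. That is, exact probabilistic inversion of an unknown d-dimensional unitary on a known pure state is impossible with fewer than d−1 parallel calls, even with full classical knowledge of the input state. -/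
open Matrix Kronecker BigOperators ComplexOrder

noncomputable section

/-- Kraus-type polynomial amplitude. -/
def kAmp {d k : ℕ} {α : Type*} (B : Matrix α (((Fin k → Fin d) × (Fin k → Fin d)) × Fin d) ℂ)
    (U : Matrix (Fin d) (Fin d) ℂ) (a : α) (f : Fin d) : ℂ :=
  ∑ x : (Fin k → Fin d) × (Fin k → Fin d), star (B a (x, f)) * ∏ j, U (x.2 j) (x.1 j)

theorem actK_apply {d k : ℕ} {α : Type*} [Fintype α]
    (B : Matrix α (((Fin k → Fin d) × (Fin k → Fin d)) × Fin d) ℂ)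
    (U : Matrix (Fin d) (Fin d) ℂ) (f g : Fin d) :
    actK (Bᴴ * B) U f g = ∑ a, kAmp B U a f * star (kAmp B U a g) := by
  have h1 : actK (Bᴴ * B) U f g = ∑ x : (Fin k → Fin d) × (Fin k → Fin d),
      ∑ y : (Fin k → Fin d) × (Fin k → Fin d),
      (∑ a, star (B a (x, f)) * B a (y, g)) *
        ((∏ j, star (U (y.2 j) (y.1 j))) * ∏ j, U (x.2 j) (x.1 j)) := by
    unfold actK ptrLeft
    refine Finset.sum_congr rfl fun x _ => ?_
    rw [Matrix.mul_apply, Fintype.sum_prod_type]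
    refine Finset.sum_congr rfl fun y _ => ?_
    rw [Finset.sum_eq_single g]
    · simp [Matrix.mul_apply, choiProjK, choiProj, outer, choiVec, mconj, Matrix.vecMulVec_apply,
        Finset.prod_mul_distrib]
    · intro b _ hb
      simp [Matrix.one_apply, hb]
    · simp
  rw [h1]
  have h2 : ∀ a, kAmp B U a f * star (kAmp B U a g)
      = ∑ x : (Fin k → Fin d) × (Fin k → Fin d), ∑ y : (Fin k → Fin d) × (Fin k → Fin d),
        (star (B a (x, f)) * B a (y, g)) *
        ((∏ j, star (U (y.2 j) (y.1 j))) * ∏ j, U (x.2 j) (x.1 j)) := by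
    intro a
    simp only [kAmp, star_sum, Finset.sum_mul_sum]
    refine Finset.sum_congr rfl fun x _ => Finset.sum_congr rfl fun y _ => ?_
    rw [star_mul', star_star, star_prod]
    ring
  simp only [h2, Finset.sum_mul]
  rw [Finset.sum_comm]
  rw [Finset.sum_comm]
  conv_rhs => rw [Finset.sum_comm]
  refine Finset.sum_congr rfl fun x _ => ?_
  rw [Finset.sum_comm]

theorem amp_parallel {d k : ℕ} {α : Type*} [Fintype α]
    (B : Matrix α (((Fin k → Fin d) × (Fin k → Fin d)) × Fin d) ℂ)
    (U : Matrix (Fin d) (Fin d) ℂ) (p : ℂ) (u : Fin d → ℂ)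
    (h : ∀ f g, ∑ a, kAmp B U a f * star (kAmp B U a g) = p * (u f * star (u g)))
    (i j : Fin d) (a : α) : u i * kAmp B U a j = u j * kAmp B U a i := by
  set φ := kAmp B U
  have hs : ∑ a, (u i * φ a j - u j * φ a i) * star (u i * φ a j - u j * φ a i) = 0 := by
    have : ∀ a, (u i * φ a j - u j * φ a i) * star (u i * φ a j - u j * φ a i)
      = u i * star (u i) * (φ a j * star (φ a j)) - u i * star (u j) * (φ a j * star (φ a i))
       - u j * star (u i) * (φ a i * star (φ a j)) + u j * star (u j) * (φ a i * star (φ a i)) := by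
      intro a
      simp only [star_sub, star_mul']
      ring
    simp only [this, Finset.sum_add_distrib, Finset.sum_sub_distrib, ← Finset.mul_sum, h]
    ring
  rw [Finset.sum_eq_zero_iff_of_nonneg (fun a _ => mul_star_self_nonneg _)] at hs
  have := hs a (Finset.mem_univ _)
  have h2 : u i * φ a j - u j * φ a i = 0 := by
    rcases mul_eq_zero.1 this with h | h
    · exact h
    · exact star_eq_zero.1 h
  exact sub_eq_zero.1 h2

theorem exists_unit_root (d : ℕ) (hd : d ≠ 0) (c : ℂ) (hc : ‖c‖ = 1) :
    ∃ l : ℂ, ‖l‖ = 1 ∧ l ^ d * c = 1 := by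
  obtain ⟨l, hl⟩ := IsAlgClosed.exists_pow_nat_eq (c⁻¹) (Nat.pos_of_ne_zero hd)
  have hc0 : c ≠ 0 := by rintro rfl; simp at hc
  refine ⟨l, ?_, by rw [hl]; field_simp⟩
  have : ‖l‖ ^ d = 1 := by rw [← norm_pow, hl, norm_inv, hc, inv_one]
  exact (pow_eq_one_iff_of_nonneg (norm_nonneg _) hd).1 this

theorem exists_generic_SU (d : ℕ) (hd : 3 ≤ d) (ψ : Fin d → ℂ) (hψ : star ψ ⬝ᵥ ψ = 1) :
    ∃ V ∈ Matrix.specialUnitaryGroup (Fin d) ℂ, ∀ i, (Vᴴ *ᵥ ψ) i ≠ 0 := by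
  have : NeZero d := ⟨by omega⟩
  have hd0 : (d : ℂ) ≠ 0 := by exact_mod_cast (by omega : d ≠ 0)
  -- a unitary matrix with A† ψ = e_0
  obtain ⟨A, hA, hA0⟩ : ∃ A ∈ Matrix.unitaryGroup (Fin d) ℂ, Aᴴ *ᵥ ψ = Pi.single 0 1 := by
    have hv : Orthonormal ℂ ((({0} : Set (Fin d))).domRestrict
        (fun _ : Fin d => (WithLp.toLp 2 ψ : EuclideanSpace ℂ (Fin d)))) := by
      rw [orthonormal_iff_ite]
      rintro ⟨i, hi⟩ ⟨j, hj⟩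
      simp only [Set.mem_singleton_iff] at hi hj
      subst hi hj
      simp only [Set.domRestrict_apply, if_true, EuclideanSpace.inner_toLp_toLp]
      rw [dotProduct_comm]; exact hψ
    obtain ⟨b, hb⟩ := hv.exists_orthonormalBasis_extension_of_card_eq (by simp)
    refine ⟨_, (EuclideanSpace.basisFun (Fin d) ℂ).toMatrix_orthonormalBasis_mem_unitary b, ?_⟩
    have hU := Matrix.mem_unitaryGroup_iff'.1
      ((EuclideanSpace.basisFun (Fin d) ℂ).toMatrix_orthonormalBasis_mem_unitary b)
    set A := (EuclideanSpace.basisFun (Fin d) ℂ).toBasis.toMatrix b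
    have hcol : ψ = A *ᵥ Pi.single 0 1 := by
      ext i
      have := hb 0 rfl
      simp [A, Module.Basis.toMatrix_apply, this]
    rw [hcol, Matrix.mulVec_mulVec, ← Matrix.star_eq_conjTranspose, hU, Matrix.one_mulVec]
  let R : Matrix (Fin d) (Fin d) ℂ := 1 - (2 / d : ℂ) • Matrix.of (fun _ _ => 1)
  have hRH : Rᴴ = R := by
    ext i j
    simp [R, Matrix.one_apply, eq_comm]
  have hJ : (Matrix.of (fun _ _ => 1) : Matrix (Fin d) (Fin d) ℂ) * Matrix.of (fun _ _ => 1)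
     = (d : ℂ) • Matrix.of (fun _ _ => 1) := by
    ext i j; simp [Matrix.mul_apply]
  have hRR : R * R = 1 := by
    simp only [R, sub_mul, mul_sub, Matrix.one_mul, Matrix.mul_one, Matrix.smul_mul,
      Matrix.mul_smul, hJ, smul_smul]
    rw [show (2 / d : ℂ) * (2 / d * d) = 2 / d + 2 / d by field_simp; norm_num]
    rw [add_smul]; abel
  have hR : R ∈ Matrix.unitaryGroup (Fin d) ℂ := by
    rw [Matrix.mem_unitaryGroup_iff, Matrix.star_eq_conjTranspose, hRH, hRR]
  have hAR := mul_mem hA hR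
  have hdet : ‖(A * R).det‖ = 1 := by
    have := Matrix.det_of_mem_unitary hAR
    exact CStarRing.norm_of_mem_unitary this
  obtain ⟨l, hl, hld⟩ := exists_unit_root d (by omega) _ hdet
  have hl0 : l ≠ 0 := by rintro rfl; simp at hl
  refine ⟨l • (A * R), ?_, ?_⟩
  · rw [Matrix.mem_specialUnitaryGroup_iff]
    constructor
    · rw [Matrix.mem_unitaryGroup_iff] at hAR ⊢
      rw [star_smul, Matrix.smul_mul, Matrix.mul_smul, hAR, smul_smul]
      have : l * star l = 1 := by
        rw [Complex.star_def, Complex.mul_conj, Complex.normSq_eq_norm_sq, hl]; simp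
      rw [this, one_smul]
    · rw [Matrix.det_smul, Fintype.card_fin, hld]
  · intro i
    rw [Matrix.conjTranspose_smul, Matrix.conjTranspose_mul, hRH, Matrix.smul_mulVec,
      ← Matrix.mulVec_mulVec, hA0]
    have h3 : (d : ℂ) ≠ 2 := by exact_mod_cast (by omega : d ≠ 2)
    simp only [Pi.smul_apply, smul_eq_mul, Matrix.mulVec_single_one, Matrix.col_apply]
    refine mul_ne_zero (star_ne_zero.2 hl0) ?_
    simp only [R, Matrix.sub_apply, Matrix.smul_apply, Matrix.of_apply, smul_eq_mul, mul_one,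
      Matrix.one_apply]
    split_ifs
    · intro h
      field_simp at h
      exact h3 (sub_eq_zero.1 (by simpa using h))
    · simp [hd0]

theorem infinite_unit : {z : ℂ | ‖z‖ = 1}.Infinite := by
  refine Set.infinite_of_injective_forall_mem
    (f := fun n : ℕ => (⟨1 / ((n : ℝ) + 1), Real.sqrt (1 - (1 / ((n : ℝ) + 1)) ^ 2)⟩ : ℂ)) ?_ ?_
  · intro m n h
    have := congrArg Complex.re h
    simpa using this
  · intro n
    have h0 : (0 : ℝ) ≤ 1 / ((n : ℝ) + 1) := by positivity
    have h1 : 1 / ((n : ℝ) + 1) ≤ 1 := by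
      rw [div_le_one (by positivity)]
      have : (0 : ℝ) ≤ n := by positivity
      linarith
    have h2 : 0 ≤ 1 - (1 / ((n : ℝ) + 1)) ^ 2 := by nlinarith
    have h3 := Complex.normSq_eq_norm_sq
      (⟨1 / ((n : ℝ) + 1), Real.sqrt (1 - (1 / ((n : ℝ) + 1)) ^ 2)⟩ : ℂ)
    rw [Complex.normSq_mk, Real.mul_self_sqrt h2] at h3
    rw [Set.mem_setOf_eq, ← pow_eq_one_iff_of_nonneg (norm_nonneg _) two_ne_zero, ← h3]
    ring

open MvPolynomial in
theorem homog_eval_smul {d k : ℕ} {Q : MvPolynomial (Fin d) ℂ} (hQ : Q.IsHomogeneous k)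
    (l : ℂ) (z : Fin d → ℂ) : eval (l • z) Q = l ^ k * eval z Q := by
  rw [eval_eq', eval_eq', Finset.mul_sum]
  refine Finset.sum_congr rfl fun m hm => ?_
  have h1 : ∑ i, m i = k := by
    have := hQ (mem_support_iff.1 hm)
    have h2 := Finsupp.degree_eq_weight_one (σ := Fin d) (R := ℕ)
    rw [← Finsupp.degree_eq_sum, ← this, h2]; rfl
  simp only [Pi.smul_apply, smul_eq_mul, mul_pow, Finset.prod_mul_distrib,
    Finset.prod_pow_eq_pow_sum, h1]
  ring

open MvPolynomial in
/-- The algebraic core. -/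
theorem poly_core {d k : ℕ} (hkd : k + 1 < d) (Q : Fin d → MvPolynomial (Fin d) ℂ)
    (hQ : ∀ i, (Q i).IsHomogeneous k) (w : Fin d → ℂ) (hw : ∀ i, w i ≠ 0)
    (h : ∀ z : Fin d → ℂ, (∀ i, ‖z i‖ = 1) → ∏ i, z i = 1 →
      ∀ i j, w i * (z j * eval z (Q j)) = w j * (z i * eval z (Q i))) (i : Fin d) : Q i = 0 := by
  have h2 : ∀ z : Fin d → ℂ, (∀ i, ‖z i‖ = 1) →
      ∀ i j, w i * (z j * eval z (Q j)) = w j * (z i * eval z (Q i)) := by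
    intro z hz i j
    obtain ⟨l, hl, hld⟩ := exists_unit_root d (by omega) (∏ i, z i) (by simp [hz])
    have hl0 : l ≠ 0 := by rintro rfl; simp at hl
    have := h (l • z) (by simp [hl, hz]) (by simp [Finset.prod_mul_distrib, hld]) i j
    rw [homog_eval_smul (hQ i), homog_eval_smul (hQ j)] at this
    simp only [Pi.smul_apply, smul_eq_mul] at this
    have h0 : l ^ (k + 1) ≠ 0 := pow_ne_zero _ hl0
    apply mul_left_cancel₀ h0
    linear_combination this
  have h3 : ∀ i j, C (w i) * (X j * Q j) = C (w j) * (X i * Q i) := by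
    intro i j
    refine funext_set (fun _ => {z : ℂ | ‖z‖ = 1}) (fun _ => ?_) fun z hz => ?_
    · exact infinite_unit
    · simpa using h2 z (fun i => hz i trivial) i j
  by_contra hne
  have hne2 : X i * Q i ≠ 0 := mul_ne_zero (X_ne_zero i) hne
  obtain ⟨m, hm⟩ := exists_coeff_ne_zero hne2
  have hdeg := ((isHomogeneous_X ℂ i).mul (hQ i)) hm
  have hall : ∀ j, 1 ≤ m j := by
    intro j
    by_contra hj
    have := congrArg (coeff m) (h3 j i)
    rw [coeff_C_mul, coeff_C_mul, coeff_X_mul' m j, if_neg (by simpa using hj), mul_zero] at this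
    exact (mul_ne_zero (hw j) hm) this
  have : d ≤ m.degree := by
    rw [Finsupp.degree_eq_sum]
    calc d = ∑ j : Fin d, 1 := by simp
      _ ≤ _ := Finset.sum_le_sum fun j _ => hall j
  have h2 := Finsupp.degree_eq_weight_one (σ := Fin d) (R := ℕ)
  rw [h2] at this
  change d ≤ Finsupp.weight 1 m at this
  omega

open MvPolynomial MatrixOrder in
theorem inversion_aux
    (d k : ℕ) (hk : 1 ≤ k) (hkd : k + 1 < d) (p : ℝ)
    (ψ : Fin d → ℂ) (hψ : star ψ ⬝ᵥ ψ = 1)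
    (S Sch : Matrix (((Fin k → Fin d) × (Fin k → Fin d)) × Fin d)
        (((Fin k → Fin d) × (Fin k → Fin d)) × Fin d) ℂ)
    (hprot : IsProtocolK S Sch)
    (htarget : ∀ U : Matrix (Fin d) (Fin d) ℂ, U ∈ Matrix.specialUnitaryGroup (Fin d) ℂ →
      actK S U = (p : ℂ) • (Uᴴ * outer ψ * U)) :
    p = 0 := by
  obtain ⟨B, rfl⟩ : ∃ B : Matrix (((Fin k → Fin d) × (Fin k → Fin d)) × Fin d)
        (((Fin k → Fin d) × (Fin k → Fin d)) × Fin d) ℂ, S = Bᴴ * B := by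
    exact CStarAlgebra.nonneg_iff_eq_star_mul_self.mp hprot.1.nonneg
  have hout : ∀ U : Matrix (Fin d) (Fin d) ℂ, ∀ f g,
      (Uᴴ * outer ψ * U) f g = (Uᴴ *ᵥ ψ) f * star ((Uᴴ *ᵥ ψ) g) := by
    intro U f g
    rw [outer, Matrix.mul_vecMulVec, Matrix.vecMulVec_mul, Matrix.vecMulVec_apply]
    congr 1
    rw [← Pi.star_apply, Matrix.star_mulVec, Matrix.conjTranspose_conjTranspose]
  have hsum : ∀ U ∈ Matrix.specialUnitaryGroup (Fin d) ℂ, ∀ f g,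
      ∑ a, kAmp B U a f * star (kAmp B U a g)
        = (p : ℂ) * ((Uᴴ *ᵥ ψ) f * star ((Uᴴ *ᵥ ψ) g)) := by
    intro U hU f g
    rw [← actK_apply, htarget U hU, Matrix.smul_apply, hout, smul_eq_mul]
  obtain ⟨V, hV, hw⟩ := exists_generic_SU d (by omega) ψ hψ
  set w := Vᴴ *ᵥ ψ with hwdef
  have hzero : ∀ a f, kAmp B V a f = 0 := by
    intro a
    let Q : Fin d → MvPolynomial (Fin d) ℂ := fun f =>
      ∑ x : (Fin k → Fin d) × (Fin k → Fin d),
        C (star (B a (x, f)) * ∏ j, V (x.2 j) (x.1 j)) * ∏ j, X (x.1 j)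
    have hQev : ∀ z f, eval z (Q f) = kAmp B (V * Matrix.diagonal z) a f := by
      intro z f
      simp [Q, kAmp, Matrix.mul_diagonal, Finset.prod_mul_distrib, map_sum, map_prod, mul_assoc]
    have hQ : ∀ f, (Q f).IsHomogeneous k := by
      intro f
      refine IsHomogeneous.sum _ _ _ fun x _ => ?_
      have h1 := IsHomogeneous.prod (Finset.univ) (fun j : Fin k => (X (x.1 j) : MvPolynomial (Fin d) ℂ))
        (fun _ => 1) (fun j _ => isHomogeneous_X ℂ _)
      simpa using (isHomogeneous_C (Fin d) (star (B a (x, f)) * ∏ j, V (x.2 j) (x.1 j))).mul h1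
    have hcore := poly_core hkd Q hQ w hw (by
      intro z hz hz1 i j
      have hzz : ∀ i, z i * star (z i) = 1 := fun i => by
        rw [Complex.star_def, Complex.mul_conj, Complex.normSq_eq_norm_sq, hz]; simp
      have hD : V * Matrix.diagonal z ∈ Matrix.specialUnitaryGroup (Fin d) ℂ := by
        refine mul_mem hV ?_
        rw [Matrix.mem_specialUnitaryGroup_iff, Matrix.mem_unitaryGroup_iff,
          Matrix.star_eq_conjTranspose, Matrix.diagonal_conjTranspose, Matrix.diagonal_mul_diagonal]
        refine ⟨?_, by rw [Matrix.det_diagonal, hz1]⟩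
        rw [← Matrix.diagonal_one]
        congr 1
        ext i
        exact hzz i
      have hpar := amp_parallel B _ (p : ℂ) _ (hsum _ hD) i j a
      rw [← hQev, ← hQev] at hpar
      have hu : ∀ i, ((V * Matrix.diagonal z)ᴴ *ᵥ ψ) i = star (z i) * w i := by
        intro i
        rw [Matrix.conjTranspose_mul, Matrix.diagonal_conjTranspose, ← Matrix.mulVec_mulVec,
          Matrix.mulVec_diagonal]
        rfl
      rw [hu, hu] at hpar
      linear_combination (z i * z j) * hpar - w i * z j * eval z (Q j) * hzz i
        + w j * z i * eval z (Q i) * hzz j)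
    intro f
    have := hQev 1 f
    rw [hcore f] at this
    simpa using this.symm
  have h0 : (⟨0, by omega⟩ : Fin d) = ⟨0, by omega⟩ := rfl
  have := hsum V hV ⟨0, by omega⟩ ⟨0, by omega⟩
  simp only [hzero, zero_mul, Finset.sum_const_zero] at this
  rcases mul_eq_zero.1 this.symm with h | h
  · exact_mod_cast h
  · rcases mul_eq_zero.1 h with h | h
    · exact absurd h (hw _)
    · exact absurd (star_eq_zero.1 h) (hw _)

/-- **No-go for probabilistic exact inversion with `k < d−1` parallel calls,
known pure input state.** (`k + 1 < d` is equivalent to `k < d − 1`.) -/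
theorem inversion_no_go_k_calls
    (d k : ℕ) (hk : 1 ≤ k) (hkd : k + 1 < d) (p : ℝ)
    (ψ : Fin d → ℂ) (hψ : star ψ ⬝ᵥ ψ = 1)
    (S Sch : Matrix (((Fin k → Fin d) × (Fin k → Fin d)) × Fin d)
        (((Fin k → Fin d) × (Fin k → Fin d)) × Fin d) ℂ)
    (hprot : IsProtocolK S Sch)
    (htarget : ∀ U : Matrix (Fin d) (Fin d) ℂ, U ∈ Matrix.specialUnitaryGroup (Fin d) ℂ →
      actK S U = (p : ℂ) • (Uᴴ * outer ψ * U)) :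
    p = 0 := by
  exact inversion_aux d k hk hkd p ψ hψ S Sch hprot htarget
end
end
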